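/- Let G be a finitely generated virtually abelian group and let S be a finite set generating G as a monoid with weight function ω : S → ℕ₊. Define the weight of a conjugacy class c of G to be ω(c) = min{ω(x) : x ∈ c}. Then the weighted conjugacy growth series of G, namely ∑_{n≥0} #{conjugacy classes c of G : ω(c) = n} zⁿ, is a rational power series. -/

import Mathlib

/-- The weight of a group element `g` with respect to a generating set `S` and a
weight function `ω`: the minimal total weight among all words over `S` representing `g`. -/
noncomputable def wordWeight {G : Type*} [Group G] (S : Set G) (ω : G → ℕ) (g : G) : ℕ :=
  sInf {n | ∃ l : List G, (∀ x ∈ l, x ∈ S) ∧ l.prod = g ∧ (l.map ω).sum = n}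

/-- The weight of a conjugacy class: the minimal weight of an element of the class. -/
noncomputable def conjClassWeight {G : Type*} [Group G] (S : Set G) (ω : G → ℕ)
    (c : ConjClasses G) : ℕ :=
  sInf {n | ∃ g : G, ConjClasses.mk g = c ∧ wordWeight S ω g = n}

/-- A formal power series with integer coefficients is rational if it is the quotient
of two integer polynomials. -/
def IsRationalSeries (f : PowerSeries ℤ) : Prop :=
  ∃ p q : Polynomial ℤ, q ≠ 0 ∧ f * (q : PowerSeries ℤ) = (p : PowerSeries ℤ)

/-!
Let `N` be an abelian normal subgroup of finite index. The pairs (value, weight) of words over the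
generators form a finitely generated submonoid of `G × ℕ`. By Kleene's algorithm on the Schreier
graph of `N`, its part over a coset `N * r` is a semilinear subset of `N × ℕ`. Conjugacy of `x *
r` and `y * s`, as a relation between `x` and `y` in `N`, is semilinear as well: for conjugators
in a fixed coset it is a linear equation, and there are finitely many cosets. Pulling everything
back to `ℕ ^ r`, where lexicographic comparison is semilinear too, one can therefore single out,
by a semilinear set, exactly one pair of least weight for every conjugacy class.

It remains to see that a semilinear set with finite weight fibres has a rational generating
function. It is a finite union of sets `F + P` with `F` finite and `P` a finitely generated monoid
with no nonzero elements of weight zero. Such sets are closed under intersection, so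
inclusion-exclusion reduces the claim to a single one. Choosing the lexicographically least
preimages under a parametrization of `F + P` by finitely many copies of `ℕ ^ r` turns it into
finitely many lower sets of `ℕ ^ r`. The complement of a lower set is a finite union of translates
of `ℕ ^ r`.
-/

namespace IsRationalSeries

open Polynomial

variable {f g : PowerSeries ℤ}

theorem coe (p : ℤ[X]) : IsRationalSeries (p : PowerSeries ℤ) :=
  ⟨p, 1, one_ne_zero, by simp⟩

theorem add (hf : IsRationalSeries f) (hg : IsRationalSeries g) : IsRationalSeries (f + g) := by
  obtain ⟨p, q, hq, h⟩ := hf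
  obtain ⟨p', q', hq', h'⟩ := hg
  refine ⟨p * q' + p' * q, q * q', mul_ne_zero hq hq', ?_⟩
  push_cast
  rw [← h, ← h']
  ring

theorem coe_mul (r : ℤ[X]) (hf : IsRationalSeries f) :
    IsRationalSeries ((r : PowerSeries ℤ) * f) := by
  obtain ⟨p, q, hq, h⟩ := hf
  refine ⟨r * p, q, hq, ?_⟩
  push_cast
  rw [← h, mul_assoc]

theorem sub (hf : IsRationalSeries f) (hg : IsRationalSeries g) : IsRationalSeries (f - g) := by
  simpa [sub_eq_add_neg] using hf.add (hg.coe_mul (-1))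

theorem of_coe_mul {r : ℤ[X]} (hr : r ≠ 0) (hf : IsRationalSeries ((r : PowerSeries ℤ) * f)) :
    IsRationalSeries f := by
  obtain ⟨p, q, hq, h⟩ := hf
  refine ⟨p, r * q, mul_ne_zero hr hq, ?_⟩
  rw [← h]
  push_cast
  ring

theorem of_eq_add_X_pow_mul {d : ℕ} (hd : 0 < d) (hg : IsRationalSeries g)
    (h : f = g + PowerSeries.X ^ d * f) : IsRationalSeries f := by
  have hne : (1 - X ^ d : ℤ[X]) ≠ 0 := fun h0 => by
    simpa [hd.ne'] using congrArg (Polynomial.eval 0) h0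
  refine of_coe_mul hne ?_
  convert hg using 1
  push_cast
  linear_combination h

end IsRationalSeries

section Growth

variable {α β : Type*} {w w' : α → ℕ} {A B : Set α}

/-- The generating function of a set `A` for a weight `w`: the coefficient of `X ^ k` is the number
of elements of `A` of weight `k`. It counts with `Set.ncard`, so a coefficient is `0` where there
are infinitely many such elements. -/
noncomputable def growthSeries (w : α → ℕ) (A : Set α) : PowerSeries ℤ :=
  PowerSeries.mk fun k => ((A ∩ w ⁻¹' {k}).ncard : ℤ)

theorem growthSeries_empty (w : α → ℕ) : growthSeries w ∅ = 0 := by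
  ext k
  simp [growthSeries]

theorem growthSeries_congr (h : Set.EqOn w w' A) : growthSeries w A = growthSeries w' A := by
  ext k
  simp only [growthSeries, PowerSeries.coeff_mk, h.inter_preimage_eq]

theorem growthSeries_union_add_inter (hA : ∀ k, (A ∩ w ⁻¹' {k}).Finite)
    (hB : ∀ k, (B ∩ w ⁻¹' {k}).Finite) :
    growthSeries w (A ∪ B) + growthSeries w (A ∩ B) = growthSeries w A + growthSeries w B := by
  ext k
  have h := Set.ncard_union_add_ncard_inter (A ∩ w ⁻¹' {k}) (B ∩ w ⁻¹' {k}) (hA k) (hB k)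
  rw [← Set.union_inter_distrib_right, ← Set.inter_inter_distrib_right] at h
  simp only [growthSeries, map_add, PowerSeries.coeff_mk]
  exact_mod_cast h

theorem growthSeries_image {w : β → ℕ} {g : α → β} (hg : Set.InjOn g A) :
    growthSeries w (g '' A) = growthSeries (w ∘ g) A := by
  ext k
  simp only [growthSeries, PowerSeries.coeff_mk, ← Set.image_inter_preimage, Set.preimage_comp,
    (hg.mono Set.inter_subset_left).ncard_image]

theorem growthSeries_add_const (w : α → ℕ) (A : Set α) (d : ℕ) :
    growthSeries (fun x => w x + d) A = PowerSeries.X ^ d * growthSeries w A := by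
  ext k
  rw [PowerSeries.coeff_X_pow_mul']
  simp only [growthSeries, PowerSeries.coeff_mk]
  split_ifs with hk
  · congr! 3
    ext x
    simp only [Set.mem_preimage, Set.mem_singleton_iff]
    omega
  · have : A ∩ (fun x => w x + d) ⁻¹' {k} = ∅ := by
      ext x
      simp only [Set.mem_inter_iff, Set.mem_preimage, Set.mem_singleton_iff,
        Set.mem_empty_iff_false, iff_false, not_and]
      omega
    simp [this]

/-- The elements of `A`, counted by the weight `w`, have a rational generating function. Finiteness
of the number of elements of each weight is part of the definition, as `growthSeries` only then
counts them. -/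
structure HasRationalGrowth (w : α → ℕ) (A : Set α) : Prop where
  finite_fibers : ∀ k, (A ∩ w ⁻¹' {k}).Finite
  isRationalSeries : IsRationalSeries (growthSeries w A)

namespace HasRationalGrowth

theorem empty (w : α → ℕ) : HasRationalGrowth w ∅ where
  finite_fibers := by simp
  isRationalSeries := by simpa [growthSeries_empty] using IsRationalSeries.coe 0

theorem singleton (w : α → ℕ) (a : α) : HasRationalGrowth w {a} where
  finite_fibers k := (Set.finite_singleton a).inter_of_left _
  isRationalSeries := by
    convert IsRationalSeries.coe (Polynomial.X ^ w a) using 1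
    ext k
    obtain rfl | hk := eq_or_ne k (w a)
    · simp [growthSeries, PowerSeries.coeff_X_pow]
    · have : {a} ∩ w ⁻¹' {k} = ∅ := by simpa using hk.symm
      simp [growthSeries, PowerSeries.coeff_X_pow, hk, this]

theorem congr (hA : HasRationalGrowth w A) (h : Set.EqOn w w' A) : HasRationalGrowth w' A where
  finite_fibers k := h.inter_preimage_eq {k} ▸ hA.finite_fibers k
  isRationalSeries := growthSeries_congr h ▸ hA.isRationalSeries

theorem union (hA : HasRationalGrowth w A) (hB : HasRationalGrowth w B)
    (hAB : HasRationalGrowth w (A ∩ B)) : HasRationalGrowth w (A ∪ B) where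
  finite_fibers k := by
    rw [Set.union_inter_distrib_right]
    exact (hA.finite_fibers k).union (hB.finite_fibers k)
  isRationalSeries := by
    rw [eq_sub_of_add_eq (growthSeries_union_add_inter hA.finite_fibers hB.finite_fibers)]
    exact (hA.isRationalSeries.add hB.isRationalSeries).sub hAB.isRationalSeries

theorem union_of_disjoint (hA : HasRationalGrowth w A) (hB : HasRationalGrowth w B)
    (hAB : Disjoint A B) : HasRationalGrowth w (A ∪ B) :=
  hA.union hB (hAB.inter_eq ▸ empty w)

theorem sdiff (hA : HasRationalGrowth w A) (hB : HasRationalGrowth w B) (hBA : B ⊆ A) :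
    HasRationalGrowth w (A \ B) := by
  have hfin : ∀ k, ((A \ B) ∩ w ⁻¹' {k}).Finite := fun k =>
    (hA.finite_fibers k).subset (Set.inter_subset_inter_left _ Set.sdiff_subset)
  refine ⟨hfin, ?_⟩
  have h := growthSeries_union_add_inter hfin hB.finite_fibers
  rw [Set.sdiff_union_of_subset hBA, Set.sdiff_inter_self, growthSeries_empty, add_zero] at h
  rw [eq_sub_of_add_eq h.symm]
  exact hA.isRationalSeries.sub hB.isRationalSeries

theorem image {w : β → ℕ} {g : α → β} (hA : HasRationalGrowth (w ∘ g) A) (hg : Set.InjOn g A) :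
    HasRationalGrowth w (g '' A) where
  finite_fibers k := by
    rw [← Set.image_inter_preimage]
    exact (hA.finite_fibers k).image g
  isRationalSeries := growthSeries_image hg ▸ hA.isRationalSeries

theorem add_const (hA : HasRationalGrowth w A) (d : ℕ) :
    HasRationalGrowth (fun x => w x + d) A where
  finite_fibers k := by
    refine (hA.finite_fibers (k - d)).subset (Set.inter_subset_inter_right _ fun x hx => ?_)
    simp only [Set.mem_preimage, Set.mem_singleton_iff] at hx ⊢
    omega
  isRationalSeries := by
    simpa [growthSeries_add_const] using hA.isRationalSeries.coe_mul (Polynomial.X ^ d)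

theorem of_translate {g : α → α} (hg : Set.InjOn g A) (hgA : Set.MapsTo g A A) {d : ℕ}
    (hd : 0 < d) (hw : ∀ x ∈ A, w (g x) = w x + d) (h : HasRationalGrowth w (A \ g '' A)) :
    HasRationalGrowth w A := by
  have hsplit : A = A \ g '' A ∪ g '' A := (Set.sdiff_union_of_subset hgA.image_subset).symm
  have hfin : ∀ k, (A ∩ w ⁻¹' {k}).Finite := by
    intro k
    induction k using Nat.strong_induction_on with | _ k ih
    rw [hsplit, Set.union_inter_distrib_right]
    refine (h.finite_fibers k).union ?_
    obtain hk | hk := Nat.eq_zero_or_pos k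
    · refine Set.finite_empty.subset ?_
      rintro _ ⟨⟨x, hx, rfl⟩, hxk : w (g x) = k⟩
      exact absurd (hw x hx) (by omega)
    · refine ((ih (k - d) (by omega)).image g).subset ?_
      rintro _ ⟨⟨x, hx, rfl⟩, hxk : w (g x) = k⟩
      exact ⟨x, ⟨hx, Nat.eq_sub_of_add_eq (hw x hx ▸ hxk)⟩, rfl⟩
  refine ⟨hfin, h.isRationalSeries.of_eq_add_X_pow_mul hd ?_⟩
  have himage : growthSeries w (g '' A) = PowerSeries.X ^ d * growthSeries w A := by
    rw [growthSeries_image hg, growthSeries_congr (w := w ∘ g) hw, growthSeries_add_const]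
  have hunion := growthSeries_union_add_inter h.finite_fibers
    fun k => (hfin k).subset (Set.inter_subset_inter_left _ hgA.image_subset)
  rwa [← hsplit, Set.sdiff_inter_self, growthSeries_empty, add_zero, himage] at hunion

theorem biUnion_of_inter_mem {ι : Type*} {𝒢 : Set (Set α)} (h𝒢 : ∀ A ∈ 𝒢, HasRationalGrowth w A)
    (hinter : ∀ A ∈ 𝒢, ∀ B ∈ 𝒢, A ∩ B ∈ 𝒢) {s : Set ι} (hs : s.Finite) {f : ι → Set α}
    (hf : ∀ i ∈ s, f i ∈ 𝒢) : HasRationalGrowth w (⋃ i ∈ s, f i) := by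
  induction s, hs using Set.Finite.induction_on generalizing f with
  | empty => simpa using empty w
  | @insert a s _ _ ih =>
    have ha : f a ∈ 𝒢 := hf a (Set.mem_insert a s)
    have hs : ∀ i ∈ s, f i ∈ 𝒢 := fun i hi => hf i (Set.mem_insert_of_mem a hi)
    rw [Set.biUnion_insert]
    refine (h𝒢 _ ha).union (ih hs) ?_
    rw [Set.inter_iUnion₂]
    exact ih fun i hi => hinter _ ha _ (hs i hi)

theorem of_slices {ι : Type*} [Finite ι] {w : ι × α → ℕ} {A : Set (ι × α)}
    (h : ∀ i, HasRationalGrowth (fun x => w (i, x)) {x | (i, x) ∈ A}) : HasRationalGrowth w A := by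
  have hA : A = ⋃ i ∈ (Set.univ : Set ι), Prod.mk i '' {x | (i, x) ∈ A} := by
    ext ⟨i, x⟩
    simp
  rw [hA]
  induction Set.univ, Set.finite_univ (α := ι) using Set.Finite.induction_on with
  | empty => simpa using empty w
  | @insert a s ha _ ih =>
    rw [Set.biUnion_insert]
    refine ((h a).image (Prod.mk_right_injective a).injOn).union_of_disjoint ih ?_
    refine Set.disjoint_iUnion₂_right.2 fun i hi => Set.disjoint_left.2 ?_
    rintro _ ⟨x, -, rfl⟩ ⟨y, -, hy⟩
    obtain rfl : i = a := congrArg Prod.fst hy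
    exact ha hi

end HasRationalGrowth

end Growth

section Orthant

variable {ι : Type*} [DecidableEq ι] {w : (ι → ℕ) →+ ℕ}

theorem hasRationalGrowth_support_subset (hw : ∀ j, 0 < w (Pi.single j 1)) {T : Set ι}
    (hT : T.Finite) : HasRationalGrowth w {c | Function.support c ⊆ T} := by
  induction T, hT using Set.Finite.induction_on with
  | empty => simpa using HasRationalGrowth.singleton w 0
  | @insert j T hj _ ih =>
    have himage : (· + Pi.single j 1) '' {c | Function.support c ⊆ insert j T} =
        {c | Function.support c ⊆ insert j T ∧ c j ≠ 0} := by
      ext c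
      constructor
      · rintro ⟨c, hc, rfl⟩
        exact ⟨(Function.support_add c _).trans (Set.union_subset hc (by simp)), by simp⟩
      · rintro ⟨hc, hcj⟩
        refine ⟨c - Pi.single j 1, fun i hi => hc fun h0 => hi (by simp [h0]), ?_⟩
        refine tsub_add_cancel_of_le fun i => ?_
        obtain rfl | hij := eq_or_ne i j
        · simpa using Nat.one_le_iff_ne_zero.2 hcj
        · simp [hij]
    refine .of_translate (add_left_injective (Pi.single j 1)).injOn
      (Set.mapsTo_iff_image_subset.2 (himage.trans_subset fun c hc => hc.1)) (hw j)
      (fun c _ => map_add w c _) ?_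
    convert ih using 1
    ext c
    rw [himage]
    grind [Function.mem_support]

variable [Finite ι]

theorem hasRationalGrowth_Ici (hw : ∀ j, 0 < w (Pi.single j 1)) (m : ι → ℕ) :
    HasRationalGrowth w (Set.Ici m) := by
  have huniv : HasRationalGrowth w Set.univ := by
    simpa using hasRationalGrowth_support_subset hw Set.finite_univ
  have himage : (· + m) '' Set.univ = Set.Ici m := by
    ext c
    simp [le_iff_exists_add', eq_comm]
  rw [← himage]
  refine ((huniv.add_const (w m)).congr fun c _ => ?_).image (add_left_injective m).injOn
  exact (map_add w c m).symm

theorem hasRationalGrowth_of_isUpperSet (hw : ∀ j, 0 < w (Pi.single j 1)) {D : Set (ι → ℕ)}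
    (hD : IsUpperSet D) : HasRationalGrowth w D := by
  have hmin : {m | Minimal (· ∈ D) m}.Finite :=
    WellQuasiOrderedLE.finite_of_isAntichain (setOfPred_minimal_antichain _)
  have hunion : D = ⋃ m ∈ {m | Minimal (· ∈ D) m}, Set.Ici m := by
    ext c
    simp only [Set.mem_iUnion₂, Set.mem_Ici, exists_prop]
    constructor
    · intro hc
      obtain ⟨m, hmc, hm⟩ := exists_minimal_le_of_wellFoundedLT (· ∈ D) c hc
      exact ⟨m, hm, hmc⟩
    · rintro ⟨m, hm, hmc⟩
      exact hD hmc hm.prop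
  rw [hunion]
  refine .biUnion_of_inter_mem (𝒢 := Set.range Set.Ici) ?_ ?_ hmin fun m _ => ⟨m, rfl⟩
  · rintro _ ⟨m, rfl⟩
    exact hasRationalGrowth_Ici hw m
  · rintro _ ⟨m, rfl⟩ _ ⟨m', rfl⟩
    exact ⟨m ⊔ m', Set.Ici_inter_Ici.symm⟩

theorem hasRationalGrowth_of_isLowerSet (hw : ∀ j, 0 < w (Pi.single j 1)) {D : Set (ι → ℕ)}
    (hD : IsLowerSet D) : HasRationalGrowth w D := by
  have h := (hasRationalGrowth_of_isUpperSet hw isUpperSet_univ).sdiff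
    (hasRationalGrowth_of_isUpperSet hw hD.compl) (Set.subset_univ _)
  rwa [← Set.compl_eq_univ_sdiff, compl_compl] at h

end Orthant

section FiberMin

variable {α β L : Type*} {A : Set α} {κ : α → L} {F : α → β}

/-- The elements of `A` with the least key `κ` among all elements of `A` with the same image under
`F`. For an injective key in a well-order they represent each element of `F '' A` exactly once. -/
def fiberMin [LE L] (A : Set α) (κ : α → L) (F : α → β) : Set α :=
  {a ∈ A | ∀ b ∈ A, F b = F a → κ a ≤ κ b}

theorem injOn_fiberMin [PartialOrder L] (hκ : κ.Injective) : Set.InjOn F (fiberMin A κ F) :=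
  fun a ha b hb hab => hκ ((ha.2 b hb.1 hab.symm).antisymm (hb.2 a ha.1 hab))

theorem image_fiberMin [LinearOrder L] [WellFoundedLT L] : F '' fiberMin A κ F = F '' A := by
  refine (Set.image_mono fun a ha => ha.1).antisymm ?_
  rintro _ ⟨a, ha, rfl⟩
  obtain ⟨b, ⟨hb, hba⟩, hmin⟩ := WellFounded.has_min (InvImage.wf κ wellFounded_lt)
    {b ∈ A | F b = F a} ⟨a, ha, rfl⟩
  exact ⟨b, ⟨hb, fun c hc hcb => not_lt.1 (hmin c ⟨hc, hcb.trans hba⟩)⟩, hba⟩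

theorem HasRationalGrowth.image_of_fiberMin [LinearOrder L] [WellFoundedLT L] (hκ : κ.Injective)
    {w : β → ℕ} (h : HasRationalGrowth (w ∘ F) (fiberMin A κ F)) : HasRationalGrowth w (F '' A) :=
  image_fiberMin (κ := κ) (F := F) ▸ h.image (injOn_fiberMin hκ)

end FiberMin

section SubmonoidInter

open Pointwise AddSubmonoid

variable {M : Type*}

theorem exists_finite_setOfPred_add_eq_add {K : Type*} [AddCommMonoid K] [PartialOrder K]
    [WellQuasiOrderedLE K] [CanonicallyOrderedAdd K] [AddCancelCommMonoid M] (f g : K →+ M)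
    (a b : M) : ∃ D : Set K, D.Finite ∧ {x | a + f x = b + g x} = D + (f.eqLocusM g : Set K) := by
  refine ⟨{x | Minimal (· ∈ {x | a + f x = b + g x}) x},
    WellQuasiOrderedLE.finite_of_isAntichain (setOfPred_minimal_antichain _), ?_⟩
  ext x
  constructor
  · intro hx
    obtain ⟨m, hmx, hm⟩ := exists_minimal_le_of_wellFoundedLT (· ∈ {x | a + f x = b + g x}) x hx
    obtain ⟨e, rfl⟩ := le_iff_exists_add.1 hmx
    refine Set.add_mem_add hm (AddMonoidHom.mem_eqLocusM.2 ?_)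
    have hm' : a + f m = b + g m := hm.prop
    rw [Set.mem_ofPred_eq, map_add, map_add, ← add_assoc, ← add_assoc, hm'] at hx
    exact add_left_cancel hx
  · rintro ⟨m, hm, e, he, rfl⟩
    have hm' : a + f m = b + g m := hm.prop
    have he' : f e = g e := he
    simp only [Set.mem_ofPred_eq, map_add, ← add_assoc, hm', he']

theorem mrange_inf_mrange {K K' : Type*} [AddCommMonoid K] [AddCommMonoid K'] [AddCommMonoid M]
    (f : K →+ M) (g : K' →+ M) : AddMonoidHom.mrange f ⊓ AddMonoidHom.mrange g =
      ((f.comp (.fst K K')).eqLocusM (g.comp (.snd K K'))).map (f.comp (.fst K K')) := by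
  ext x
  simp only [mem_inf, AddMonoidHom.mem_mrange, mem_map, AddMonoidHom.mem_eqLocusM,
    AddMonoidHom.comp_apply, AddMonoidHom.coe_fst, AddMonoidHom.coe_snd, Prod.exists]
  constructor
  · rintro ⟨⟨c, rfl⟩, d, hd⟩
    exact ⟨c, d, hd.symm, rfl⟩
  · rintro ⟨c, d, hcd, rfl⟩
    exact ⟨⟨c, rfl⟩, d, hcd.symm⟩

variable [AddCancelCommMonoid M] {P Q : AddSubmonoid M}

theorem fg_inf_of_fg (hP : P.FG) (hQ : Q.FG) : (P ⊓ Q).FG := by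
  obtain ⟨m, f, rfl⟩ := fg_iff_exists_fin_addMonoidHom.1 hP
  obtain ⟨n, g, rfl⟩ := fg_iff_exists_fin_addMonoidHom.1 hQ
  rw [mrange_inf_mrange]
  exact (fg_eqLocusM _ _).map _

theorem exists_finite_vadd_inter_vadd (hP : P.FG) (hQ : Q.FG) (a b : M) :
    ∃ F : Set M, F.Finite ∧
      (a +ᵥ (P : Set M)) ∩ (b +ᵥ (Q : Set M)) = F + ((P ⊓ Q : AddSubmonoid M) : Set M) := by
  obtain ⟨m, f, rfl⟩ := fg_iff_exists_fin_addMonoidHom.1 hP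
  obtain ⟨n, g, rfl⟩ := fg_iff_exists_fin_addMonoidHom.1 hQ
  set f' := f.comp (.fst (Fin m → ℕ) (Fin n → ℕ))
  set g' := g.comp (.snd (Fin m → ℕ) (Fin n → ℕ))
  obtain ⟨D, hD, hsol⟩ := exists_finite_setOfPred_add_eq_add f' g' a b
  refine ⟨(a + f' ·) '' D, hD.image _, ?_⟩
  rw [mrange_inf_mrange, coe_map]
  have himage : (a + f' ·) '' (D + (f'.eqLocusM g' : Set _)) =
      (a + f' ·) '' D + f' '' (f'.eqLocusM g' : Set _) := by
    simp only [← Set.image2_add, Set.image_image2, Set.image2_image_left, Set.image2_image_right,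
      map_add, add_assoc]
  rw [← himage, ← hsol]
  ext x
  simp only [Set.mem_inter_iff, Set.mem_vadd_set, SetLike.mem_coe, AddMonoidHom.mem_mrange]
  constructor
  · rintro ⟨⟨_, ⟨c, rfl⟩, rfl⟩, _, ⟨d, rfl⟩, hd⟩
    exact ⟨(c, d), hd.symm, rfl⟩
  · rintro ⟨⟨c, d⟩, hcd, rfl⟩
    exact ⟨⟨_, ⟨c, rfl⟩, rfl⟩, _, ⟨d, rfl⟩, Eq.symm hcd⟩

end SubmonoidInter

section HybridLinear

open Pointwise AddSubmonoid

variable {M : Type*}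

/-- A hybrid linear set with respect to the weight `w` is the sum of a finite set of base points and
a finitely generated submonoid of periods, where every nonzero period has positive weight. Allowing
several base points makes these sets closed under intersection. -/
def IsHybridLinearSet [AddCommMonoid M] (w : M →+ ℕ) (s : Set M) : Prop :=
  ∃ (F : Set M) (P : AddSubmonoid M),
    F.Finite ∧ P.FG ∧ (∀ x ∈ P, w x = 0 → x = 0) ∧ s = F + (P : Set M)

namespace IsHybridLinearSet

theorem inter [AddCancelCommMonoid M] {w : M →+ ℕ} {s t : Set M} (hs : IsHybridLinearSet w s)
    (ht : IsHybridLinearSet w t) : IsHybridLinearSet w (s ∩ t) := by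
  obtain ⟨F, P, hF, hP, hwP, rfl⟩ := hs
  obtain ⟨F', Q, hF', hQ, -, rfl⟩ := ht
  choose D hD hinter using exists_finite_vadd_inter_vadd hP hQ
  refine ⟨⋃ a ∈ F, ⋃ b ∈ F', D a b, P ⊓ Q, hF.biUnion fun a _ => hF'.biUnion fun b _ => hD a b,
    fg_inf_of_fg hP hQ, fun x hx => hwP x hx.1, ?_⟩
  have hadd (A B : Set M) : A + B = ⋃ a ∈ A, a +ᵥ B := Set.iUnion_add_left_image.symm
  simp only [hadd F, hadd F', Set.iUnion_add, ← hinter]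
  rw [Set.iUnion₂_inter]
  simp only [Set.inter_iUnion₂]

variable [AddCommMonoid M] {w : M →+ ℕ} {s : Set M}

theorem exists_eq_range (hs : IsHybridLinearSet w s) :
    ∃ (n r : ℕ) (a : Fin n → M) (φ : (Fin r → ℕ) →+ M), (∀ j, 0 < w (φ (Pi.single j 1))) ∧
      s = Set.range fun p : Fin n × (Fin r → ℕ) => a p.1 + φ p.2 := by
  obtain ⟨F, P, hF, ⟨B, rfl⟩, hw, rfl⟩ := hs
  obtain ⟨n, a, -, rfl⟩ := hF.fin_param
  obtain ⟨r, b, -, hb⟩ := (B.finite_toSet.subset (Set.sdiff_subset (t := {0}))).fin_param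
  refine ⟨n, r, a, (Fintype.linearCombination ℕ b).toAddMonoidHom, fun j => ?_, ?_⟩
  · have hbj : b j ∈ (B : Set M) \ {0} := hb ▸ Set.mem_range_self j
    have h := mt (hw (b j) (subset_closure hbj.1)) hbj.2
    simpa [Fintype.linearCombination_apply_single] using Nat.pos_of_ne_zero h
  · have hclosure (y : M) : y ∈ closure (B : Set M) ↔ ∃ c, Fintype.linearCombination ℕ b c = y := by
      rw [← closure_sdiff_singleton_zero, ← hb, ← Submodule.span_nat_eq_addSubmonoidClosure,
        Submodule.mem_toAddSubmonoid, ← Fintype.range_linearCombination, LinearMap.mem_range]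
    ext x
    simp [Set.mem_add, hclosure]

theorem hasRationalGrowth (hs : IsHybridLinearSet w s) : HasRationalGrowth w s := by
  obtain ⟨n, r, a, φ, hφ, rfl⟩ := hs.exists_eq_range
  rw [← Set.image_univ]
  refine .image_of_fiberMin (κ := fun p : Fin n × (Fin r → ℕ) => toLex (p.1, toLex p.2))
    (fun p q hpq => by simpa [Prod.ext_iff] using hpq) (.of_slices fun i => ?_)
  simp only [Function.comp_def, map_add, add_comm (w (a i))]
  refine .add_const (hasRationalGrowth_of_isLowerSet (w := w.comp φ) hφ ?_) _
  rintro c c' hc ⟨-, hmin⟩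
  obtain ⟨e, rfl⟩ := le_iff_exists_add.1 hc
  refine ⟨trivial, fun ⟨j, d⟩ _ hd => ?_⟩
  have h := hmin (j, d + e) trivial (by simp only [map_add, ← add_assoc, hd])
  simp only [Prod.Lex.toLex_le_toLex, toLex_add, add_le_add_iff_right] at h ⊢
  exact h

end IsHybridLinearSet

theorem eq_zero_of_mem_closure_of_apply_eq_zero [AddCommMonoid M] {w : M →+ ℕ} {B : Set M}
    (hB : ∀ b ∈ B, 0 < w b) {x : M} (hx : x ∈ closure B) (hwx : w x = 0) : x = 0 := by
  induction hx using closure_induction with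
  | mem b hb => exact absurd hwx (hB b hb).ne'
  | zero => rfl
  | add x y _ _ ihx ihy =>
    rw [map_add, Nat.add_eq_zero_iff] at hwx
    rw [ihx hwx.1, ihy hwx.2, add_zero]

theorem IsHybridLinearSet.of_isLinearSet [AddCommMonoid M] {w : M →+ ℕ} {s : Set M}
    (hs : IsLinearSet s) (hfin : ∀ k, (s ∩ w ⁻¹' {k}).Finite) : IsHybridLinearSet w s := by
  obtain ⟨a, B, hB, rfl⟩ := hs
  set B₀ := {b ∈ B | w b = 0}
  set B₁ := {b ∈ B | w b ≠ 0}
  have hB₀₁ : B = B₀ ∪ B₁ := by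
    ext b
    simp only [B₀, B₁, Set.mem_union, Set.mem_ofPred_eq, ← and_or_left, em, and_true]
  have hw₀ : closure B₀ ≤ AddMonoidHom.mker w := AddSubmonoid.closure_le.2 fun b hb => hb.2
  refine ⟨a +ᵥ (closure B₀ : Set M), closure B₁, (hfin (w a)).subset ?_,
    (fg_iff _).2 ⟨B₁, rfl, hB.sep _⟩,
    fun x => eq_zero_of_mem_closure_of_apply_eq_zero fun b hb => Nat.pos_of_ne_zero hb.2, ?_⟩
  · rintro _ ⟨b, hb, rfl⟩
    refine ⟨Set.vadd_mem_vadd_set (closure_mono (Set.sep_subset B _) hb), ?_⟩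
    simpa using hw₀ hb
  · rw [hB₀₁, AddSubmonoid.closure_union, coe_sup, vadd_add_assoc]

theorem HasRationalGrowth.of_isSemilinearSet [AddCancelCommMonoid M] {w : M →+ ℕ} {s : Set M}
    (hs : IsSemilinearSet s) (hfin : ∀ k, (s ∩ w ⁻¹' {k}).Finite) : HasRationalGrowth w s := by
  obtain ⟨S, hS, hlin, rfl⟩ := hs
  rw [Set.sUnion_eq_biUnion]
  refine .biUnion_of_inter_mem (𝒢 := {t | IsHybridLinearSet w t})
    (fun t ht => IsHybridLinearSet.hasRationalGrowth ht)
    (fun t ht t' ht' => IsHybridLinearSet.inter ht ht') hS fun t ht => ?_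
  exact IsHybridLinearSet.of_isLinearSet (hlin t ht) fun k =>
    (hfin k).subset (Set.inter_subset_inter_left _ (Set.subset_sUnion_of_mem ht))

end HybridLinear

section LeastRepresentative

theorem isSemilinearSet_setOfPred_lt {M : Type*} [AddCommMonoid M] [AddMonoid.FG M] (f g : M →+ ℕ) :
    IsSemilinearSet {x | f x < g x} := by
  have h := isSemilinearSet_setOfPred_eq 1 0 (f.comp (.fst M ℕ) + .snd M ℕ) (g.comp (.fst M ℕ))
  convert h.image (AddMonoidHom.fst M ℕ) using 1
  ext x
  simp [Nat.lt_iff_add_one_le, le_iff_exists_add, add_comm, add_left_comm, eq_comm]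

theorem isSemilinearSet_setOfPred_apply_eq {M : Type*} [AddCommMonoid M] [AddMonoid.FG M]
    (f g : M →+ ℕ) : IsSemilinearSet {x | f x = g x} := by
  simpa using isSemilinearSet_setOfPred_eq 0 0 f g

theorem isSemilinearSet_setOfPred_toLex_lt {σ : Type*} [Finite σ] [LinearOrder σ] :
    IsSemilinearSet {p : (σ → ℕ) × (σ → ℕ) | toLex p.1 < toLex p.2} := by
  have heq : {p : (σ → ℕ) × (σ → ℕ) | toLex p.1 < toLex p.2} =
      ⋃ i, (⋂ j ∈ Set.Iio i, {p | p.1 j = p.2 j}) ∩ {p | p.1 i < p.2 i} := by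
    ext p
    simp only [Set.mem_iUnion, Set.mem_inter_iff, Set.mem_iInter, Set.mem_Iio, Set.mem_ofPred_eq]
    rfl
  rw [heq]
  let fst (i : σ) := (Pi.evalAddMonoidHom (fun _ : σ => ℕ) i).comp (.fst (σ → ℕ) (σ → ℕ))
  let snd (i : σ) := (Pi.evalAddMonoidHom (fun _ : σ => ℕ) i).comp (.snd (σ → ℕ) (σ → ℕ))
  exact .iUnion fun i => .inter
    (.biInter (Set.toFinite _) fun j _ => isSemilinearSet_setOfPred_apply_eq (fst j) (snd j))
    (isSemilinearSet_setOfPred_lt (fst i) (snd i))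

variable {ι β : Type*}

/-- The key by which representatives of the same element are compared: first by weight, then, to
make the key injective, by index and lexicographically. -/
def weightLexKey {r : ℕ} (w : (Fin r → ℕ) → ℕ) (p : ι × (Fin r → ℕ)) :
    ℕ ×ₗ ι ×ₗ Lex (Fin r → ℕ) :=
  toLex (w p.2, toLex (p.1, toLex p.2))

theorem isSemilinearSet_setOfPred_weightLexKey_lt [LinearOrder ι] {r : ℕ}
    (w : (Fin r → ℕ) →+ ℕ) (i j : ι) :
    IsSemilinearSet {p : (Fin r → ℕ) × (Fin r → ℕ) |
      weightLexKey w (i, p.1) < weightLexKey w (j, p.2)} := by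
  have heq : {p : (Fin r → ℕ) × (Fin r → ℕ) | weightLexKey w (i, p.1) < weightLexKey w (j, p.2)} =
      {p | w p.1 < w p.2} ∪ {p | w p.1 = w p.2} ∩
        ({_p | i < j} ∪ {_p | i = j} ∩ {p | toLex p.1 < toLex p.2}) := by
    ext p
    simp [weightLexKey, Prod.Lex.toLex_lt_toLex]
  rw [heq]
  have hconst (P : Prop) : IsSemilinearSet {_p : (Fin r → ℕ) × (Fin r → ℕ) | P} := by
    by_cases hP : P <;> simp [hP, IsSemilinearSet.univ, IsSemilinearSet.empty]
  let wfst := w.comp (.fst (Fin r → ℕ) (Fin r → ℕ))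
  let wsnd := w.comp (.snd (Fin r → ℕ) (Fin r → ℕ))
  exact (isSemilinearSet_setOfPred_lt wfst wsnd).union
    ((isSemilinearSet_setOfPred_apply_eq wfst wsnd).inter
      ((hconst _).union ((hconst _).inter isSemilinearSet_setOfPred_toLex_lt)))

variable [Finite ι]

theorem isSemilinearSet_slice_fiberMin {M L : Type*} [AddCommMonoid M] [AddMonoid.FG M]
    [LinearOrder L] {κ : ι × M → L} {W : ι → Set M} {f : ι → M → β}
    (hW : ∀ i, IsSemilinearSet (W i))
    (hf : ∀ i j, IsSemilinearSet {p : M × M | f i p.1 = f j p.2})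
    (hκ : ∀ i j, IsSemilinearSet {p : M × M | κ (i, p.1) < κ (j, p.2)}) (i : ι) :
    IsSemilinearSet {x | (i, x) ∈ fiberMin {q | q.2 ∈ W q.1} κ fun q => f q.1 q.2} := by
  have heq : {x | (i, x) ∈ fiberMin {q | q.2 ∈ W q.1} κ fun q => f q.1 q.2} =
      W i \ ⋃ j, Prod.snd '' (Prod.fst ⁻¹' W j ∩ {p : M × M | f j p.1 = f i p.2} ∩
        {p | κ (j, p.1) < κ (i, p.2)}) := by
    ext x
    simp [fiberMin]
  rw [heq]
  exact (hW i).sdiff (.iUnion fun j => .image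
    ((((hW j).preimage (AddMonoidHom.fst M M)).inter (hf j i)).inter (hκ j i))
    (AddMonoidHom.snd M M))

theorem HasRationalGrowth.of_isLeast_fin [LinearOrder ι] {r : ℕ} {w : (Fin r → ℕ) →+ ℕ}
    {W : ι → Set (Fin r → ℕ)} {f : ι → (Fin r → ℕ) → β} {v : β → ℕ}
    (hW : ∀ i, IsSemilinearSet (W i))
    (hf : ∀ i j, IsSemilinearSet {p : (Fin r → ℕ) × (Fin r → ℕ) | f i p.1 = f j p.2})
    (hv : ∀ b, IsLeast {k | ∃ i, ∃ x ∈ W i, f i x = b ∧ w x = k} (v b))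
    (hvfin : ∀ k, (v ⁻¹' {k}).Finite) : HasRationalGrowth v Set.univ := by
  have hinj : (weightLexKey (ι := ι) w).Injective := fun p q hpq => by
    simp only [weightLexKey, EmbeddingLike.apply_eq_iff_eq, Prod.mk.injEq] at hpq
    exact Prod.ext hpq.2.1 hpq.2.2
  set A : Set (ι × (Fin r → ℕ)) := {q | q.2 ∈ W q.1}
  set F : ι × (Fin r → ℕ) → β := fun q => f q.1 q.2
  have hsurj : F '' A = Set.univ := Set.eq_univ_of_forall fun b => by
    obtain ⟨i, x, hx, hxb, -⟩ := (hv b).1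
    exact ⟨(i, x), hx, hxb⟩
  have hweight : ∀ q ∈ fiberMin A (weightLexKey w) F, w q.2 = v (F q) := by
    rintro ⟨i, x⟩ ⟨hx, hmin⟩
    obtain ⟨j, y, hy, hyx, hwy⟩ := (hv (F (i, x))).1
    refine le_antisymm ?_ ((hv _).2 ⟨i, x, hx, rfl, rfl⟩)
    exact hwy ▸ Prod.Lex.monotone_fst _ _ (hmin (j, y) hy hyx)
  rw [← hsurj]
  refine .image_of_fiberMin hinj (.of_slices fun i => ?_)
  refine .congr (.of_isSemilinearSet (w := w) (isSemilinearSet_slice_fiberMin hW hf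
    (isSemilinearSet_setOfPred_weightLexKey_lt w) i) fun k => ?_) fun x hx => hweight _ hx
  refine Set.Finite.of_finite_image ((hvfin k).subset (?_ : f i '' _ ⊆ _)) ?_
  · rintro _ ⟨x, ⟨hx, rfl⟩, rfl⟩
    exact (hweight _ hx).symm
  · exact fun x hx y hy hxy => congrArg Prod.snd (injOn_fiberMin hinj hx.1 hy.1 hxy)

theorem HasRationalGrowth.of_isLeast {M : Type*} [AddCommMonoid M] [AddMonoid.FG M] {w : M →+ ℕ}
    {W : ι → Set M} {f : ι → M → β} {v : β → ℕ} (hW : ∀ i, IsSemilinearSet (W i))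
    (hf : ∀ i j, IsSemilinearSet {p : M × M | f i p.1 = f j p.2})
    (hv : ∀ b, IsLeast {k | ∃ i, ∃ x ∈ W i, f i x = b ∧ w x = k} (v b))
    (hvfin : ∀ k, (v ⁻¹' {k}).Finite) : HasRationalGrowth v Set.univ := by
  obtain ⟨r, φ, hφ⟩ := AddSubmonoid.fg_iff_exists_fin_addMonoidHom.1 (AddMonoid.FG.fg_top (M := M))
  have hφsurj : Function.Surjective φ := AddMonoidHom.mrange_eq_top.1 hφ
  obtain ⟨n, ⟨e⟩⟩ := Finite.exists_equiv_fin ι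
  let : LinearOrder ι := LinearOrder.lift' e e.injective
  refine .of_isLeast_fin (w := w.comp φ) (W := fun i => φ ⁻¹' W i) (f := fun i x => f i (φ x))
    (fun i => (hW i).preimage φ) (fun i j => (hf i j).preimage (φ.prodMap φ)) (fun b => ?_) hvfin
  convert hv b using 1
  ext k
  simp [hφsurj.exists]

end LeastRepresentative

section Kleene

open Pointwise AddSubmonoid

variable {Q M : Type*}

/-- `PathThrough E K i j x`: the graph on the vertex set `Q` with edge labels `E` has a nonempty
path from `i` to `j` with label sum `x` all of whose inner vertices lie in `K`. -/
inductive PathThrough [Add M] (E : Q → Q → Set M) (K : Set Q) : Q → Q → M → Prop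
  | edge {i j : Q} {x : M} : x ∈ E i j → PathThrough E K i j x
  | cons {i k j : Q} {x y : M} : x ∈ E i k → k ∈ K → PathThrough E K k j y →
      PathThrough E K i j (x + y)

namespace PathThrough

variable [AddMonoid M] {E : Q → Q → Set M} {K K' : Set Q} {i j k : Q} {x y : M}

theorem mono (hK : K ⊆ K') (hx : PathThrough E K i j x) : PathThrough E K' i j x := by
  induction hx with
  | edge hx => exact .edge hx
  | cons hx hk _ ih => exact .cons hx (hK hk) ih

theorem trans (hx : PathThrough E K i k x) (hk : k ∈ K) (hy : PathThrough E K k j y) :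
    PathThrough E K i j (x + y) := by
  induction hx with
  | edge hx => exact .cons hx hk hy
  | cons hx hl _ ih => exact add_assoc _ _ y ▸ .cons hx hl (ih hk hy)

theorem closure_trans (hx : x ∈ closure {x | PathThrough E K k k x}) (hk : k ∈ K)
    (hy : PathThrough E K k j y) : PathThrough E K k j (x + y) := by
  induction hx using closure_induction generalizing y with
  | mem x hx => exact hx.trans hk hy
  | zero => rwa [zero_add]
  | add a b _ _ iha ihb => exact add_assoc a b y ▸ iha (ihb hy)

theorem setOfPred_insert (E : Q → Q → Set M) (K : Set Q) (i j k : Q) :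
    {x | PathThrough E (insert k K) i j x} = {x | PathThrough E K i j x} ∪
      ({x | PathThrough E K i k x} + ((closure {x | PathThrough E K k k x} : Set M) +
        {x | PathThrough E K k j x})) := by
  refine Set.Subset.antisymm (fun x hx => ?_)
    (Set.union_subset (fun x => mono (Set.subset_insert k K)) ?_)
  · induction hx with
    | edge hx => exact .inl (.edge hx)
    | @cons i l j x y hx hl _ ih =>
      obtain rfl | hl := hl
      · obtain hy | ⟨u, hu, _, ⟨v, hv, z, hz, rfl⟩, rfl⟩ := ih
        · exact .inr ⟨x, .edge hx, y, ⟨0, zero_mem _, y, hy, zero_add y⟩, rfl⟩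
        · have huv := add_mem (subset_closure hu) hv
          exact .inr ⟨x, .edge hx, _, ⟨u + v, huv, z, hz, add_assoc u v z⟩, rfl⟩
      · obtain hy | ⟨u, hu, v, hv, rfl⟩ := ih
        · exact .inl (.cons hx hl hy)
        · exact .inr ⟨x + u, .cons hx hl hu, v, hv, add_assoc x u v⟩
  · rintro _ ⟨u, hu, _, ⟨v, hv, z, hz, rfl⟩, rfl⟩
    have hsub {i j : Q} {x : M} : PathThrough E K i j x → PathThrough E (insert k K) i j x :=
      mono (Set.subset_insert k K)
    exact (hsub hu).trans (Set.mem_insert k K)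
      (closure_trans (closure_mono (fun _ => hsub) hv) (Set.mem_insert k K) (hsub hz))

/-- Kleene's algorithm: the inner vertices are admitted one at a time. -/
theorem isSemilinearSet {M : Type*} [AddCommMonoid M] {E : Q → Q → Set M}
    (hE : ∀ i j, IsSemilinearSet (E i j)) {K : Set Q} (hK : K.Finite) (i j : Q) :
    IsSemilinearSet {x | PathThrough E K i j x} := by
  induction K, hK using Set.Finite.induction_on generalizing i j with
  | empty =>
    convert hE i j using 1
    ext x
    refine ⟨fun hx => ?_, .edge⟩
    cases hx with
    | edge hx => exact hx
    | cons _ hk => exact hk.elim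
  | @insert k K _ _ ih =>
    rw [setOfPred_insert]
    exact (ih i j).union ((ih i k).add ((ih k k).closure.add (ih k j)))

end PathThrough

end Kleene

section RationalSubset

open Multiplicative Pointwise
open scoped IsMulCommutative

variable {G B : Type*} [Group G] {N : Subgroup G} {R : Set G}

/-- The `N`-parts of the elements of `T` in the coset decomposition of `G`, as seen from the coset
representatives `r` and `r'`: the elements of `T` are the edges of a Schreier graph of `N`, and
these are the labels of those from the coset of `r` to that of `r'`. -/
def schreierLabels (N : Subgroup G) (T : Set (G × Multiplicative B)) (r r' : G) :
    Set (Additive N × B) :=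
  {p | (r⁻¹ * p.1.toMul * r', ofAdd p.2) ∈ T}

theorem finite_schreierLabels {T : Set (G × Multiplicative B)} (hT : T.Finite) (r r' : G) :
    (schreierLabels N T r r').Finite := by
  refine hT.preimage (f := fun p : Additive N × B => (r⁻¹ * p.1.toMul * r', ofAdd p.2)) ?_
  intro p _ q _ hpq
  simpa [Prod.ext_iff] using hpq

theorem mem_schreierLabels_closure_of_pathThrough [AddMonoid B] {T : Set (G × Multiplicative B)}
    {r r' : R} {p : Additive N × B}
    (hp : PathThrough (fun s s' : R => schreierLabels N (insert 1 T) s s') Set.univ r r' p) :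
    p ∈ schreierLabels N (Submonoid.closure T : Set (G × Multiplicative B)) r r' := by
  have hT : insert 1 T ⊆ (Submonoid.closure T : Set (G × Multiplicative B)) :=
    Set.insert_subset (one_mem _) Submonoid.subset_closure
  induction hp with
  | edge hp => exact hT hp
  | @cons i k j p q hp _ _ ih =>
    have hpq : ((i : G)⁻¹ * (p + q).1.toMul * j, ofAdd (p + q).2) =
        ((i : G)⁻¹ * p.1.toMul * k, ofAdd p.2) * ((k : G)⁻¹ * q.1.toMul * j, ofAdd q.2) := by
      simp [mul_assoc]
    exact (hpq ▸ mul_mem (hT hp) ih :)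

theorem pathThrough_of_mem_schreierLabels_closure [AddMonoid B] (hR : (N : Set G) * R = Set.univ)
    {T : Set (G × Multiplicative B)} {r r' : R} {p : Additive N × B}
    (hp : p ∈ schreierLabels N (Submonoid.closure T : Set (G × Multiplicative B)) r r') :
    PathThrough (fun s s' : R => schreierLabels N (insert 1 T) s s') Set.univ r r' p := by
  change ((r : G)⁻¹ * p.1.toMul * r', ofAdd p.2) ∈ Submonoid.closure T at hp
  generalize ht : ((r : G)⁻¹ * p.1.toMul * r', ofAdd p.2) = t at hp
  induction hp using Submonoid.closure_induction_left generalizing r p with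
  | one => exact .edge (.inl ht)
  | mul_left s hs t _ ih =>
    obtain ⟨x, hx, k, hk, hxk⟩ := Set.mem_mul.1 (hR ▸ Set.mem_univ ((r : G) * s.1))
    lift x to N using hx
    have hs' : s = ((r : G)⁻¹ * x * k, s.2) := Prod.ext (by simp [mul_assoc, hxk]) rfl
    let q : Additive N × B := (-.ofMul x + p.1, t.2.toAdd)
    have hpq : p = (.ofMul x, s.2.toAdd) + q :=
      Prod.ext (by simp [q]) (congrArg (fun t => t.2.toAdd) ht)
    have hq : (k⁻¹ * q.1.toMul * r', ofAdd q.2) = t := by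
      refine Prod.ext ?_ rfl
      rw [eq_inv_mul_of_mul_eq (congrArg Prod.fst ht.symm), hs']
      simp [q, mul_assoc]
    rw [hs'] at hs
    have hedge : (.ofMul x, s.2.toAdd) ∈ schreierLabels N (insert 1 T) r k := .inr hs
    exact hpq ▸ .cons (k := ⟨k, hk⟩) hedge (Set.mem_univ _) (ih hq)

theorem isSemilinearSet_schreierLabels_closure [AddCommMonoid B] [IsMulCommutative N] [Finite R]
    (hR : (N : Set G) * R = Set.univ) {T : Set (G × Multiplicative B)} (hT : T.Finite) (r r' : R) :
    IsSemilinearSet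
      (schreierLabels N (Submonoid.closure T : Set (G × Multiplicative B)) r r') := by
  have hpath : {p | PathThrough (fun s s' : R => schreierLabels N (insert 1 T) s s')
      Set.univ r r' p} = schreierLabels N (Submonoid.closure T : Set (G × Multiplicative B)) r r' :=
    Set.ext fun _ => ⟨mem_schreierLabels_closure_of_pathThrough,
      pathThrough_of_mem_schreierLabels_closure hR⟩
  rw [← hpath]
  exact PathThrough.isSemilinearSet
    (fun _ _ => .of_finite (finite_schreierLabels (hT.insert 1) _ _)) Set.finite_univ r r'

theorem exists_finite_mul_eq_univ (N : Subgroup G) [N.FiniteIndex] :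
    ∃ R : Set G, R.Finite ∧ (N : Set G) * R = Set.univ := by
  obtain ⟨R, hR, -⟩ := N.exists_isComplement_right 1
  exact ⟨R, hR.finite_right, hR.mul_eq⟩

theorem isSemilinearSet_setOfPred_mul_mem [AddCommMonoid B] [IsMulCommutative N] [N.FiniteIndex]
    {T : Submonoid (G × Multiplicative B)} (hT : T.FG) (r : G) :
    IsSemilinearSet {p : Additive N × B | (p.1.toMul * r, ofAdd p.2) ∈ T} := by
  obtain ⟨R, hfin, hR⟩ := exists_finite_mul_eq_univ N
  have hR' : (N : Set G) * ({1, r} ∪ R : Set G) = Set.univ :=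
    Set.eq_univ_of_subset (Set.mul_subset_mul_left Set.subset_union_right) hR
  have := (((Set.finite_singleton r).insert 1).union hfin).to_subtype
  obtain ⟨T, rfl⟩ := hT
  simpa [schreierLabels] using isSemilinearSet_schreierLabels_closure hR' T.finite_toSet
    ⟨1, .inl (.inl rfl)⟩ ⟨r, .inl (.inr rfl)⟩

end RationalSubset

section Conjugacy

open Pointwise
open scoped IsMulCommutative

variable {G : Type*} [Group G] {N : Subgroup G} [N.Normal]

theorem semiconjBy_mul_iff {x y z : N} {c g h : G} :
    SemiconjBy (z * c) (x * g) (y * h) ↔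
      z * MulAut.conjNormal c x * (c * g * (h * c)⁻¹) = y * MulAut.conjNormal h z := by
  rw [SemiconjBy, ← mul_left_inj ((h * c)⁻¹)]
  simp [mul_assoc]

variable [IsMulCommutative N] [Group.FG N]

theorem isSemilinearSet_setOfPred_semiconjBy_mul (c g h : G) :
    IsSemilinearSet {q : (Additive N × Additive N) × Additive N |
      SemiconjBy (q.2.toMul * c) (q.1.1.toMul * g) (q.1.2.toMul * h)} := by
  by_cases hn : ∃ n : N, (n : G) = c * g * (h * c)⁻¹
  · obtain ⟨n, hn⟩ := hn
    let conj (k : G) : Additive N →+ Additive N := (MulAut.conjNormal k).toMonoidHom.toAdditive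
    let x : (Additive N × Additive N) × Additive N →+ Additive N :=
      (AddMonoidHom.fst _ _).comp (.fst _ _)
    let y : (Additive N × Additive N) × Additive N →+ Additive N :=
      (AddMonoidHom.snd _ _).comp (.fst _ _)
    let z : (Additive N × Additive N) × Additive N →+ Additive N := .snd _ _
    convert isSemilinearSet_setOfPred_eq (.ofMul n) 0
      (z + (conj c).comp x) (y + (conj h).comp z) using 1
    ext q
    rw [Set.mem_ofPred_eq, Set.mem_ofPred_eq, semiconjBy_mul_iff, ← hn, add_comm, zero_add]
    exact_mod_cast Iff.rfl
  · convert IsSemilinearSet.empty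
    refine Set.eq_empty_of_forall_notMem fun q hq =>
      hn ⟨(q.2.toMul * MulAut.conjNormal c q.1.1.toMul)⁻¹ *
        (q.1.2.toMul * MulAut.conjNormal h q.2.toMul), ?_⟩
    exact_mod_cast (eq_inv_mul_of_mul_eq (semiconjBy_mul_iff.1 hq)).symm

theorem isSemilinearSet_setOfPred_isConj_mul [N.FiniteIndex] (g h : G) :
    IsSemilinearSet {p : Additive N × Additive N | IsConj (p.1.toMul * g) (p.2.toMul * h)} := by
  obtain ⟨R, hfin, hR⟩ := exists_finite_mul_eq_univ N
  have hconj : {p : Additive N × Additive N | IsConj (p.1.toMul * g) (p.2.toMul * h)} =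
      ⋃ c ∈ R, AddMonoidHom.fst _ _ '' {q : (Additive N × Additive N) × Additive N |
        SemiconjBy (q.2.toMul * c) (q.1.1.toMul * g) (q.1.2.toMul * h)} := by
    ext p
    simp only [Set.mem_ofPred_eq, isConj_iff, Set.mem_iUnion, Set.mem_image, exists_prop]
    constructor
    · rintro ⟨d, hd⟩
      obtain ⟨z, hz, c, hc, rfl⟩ := Set.mem_mul.1 (hR ▸ Set.mem_univ d)
      exact ⟨c, hc, (p, .ofMul ⟨z, hz⟩), mul_inv_eq_iff_eq_mul.1 hd, rfl⟩
    · rintro ⟨c, -, q, hq, rfl⟩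
      exact ⟨q.2.toMul * c, mul_inv_eq_iff_eq_mul.2 hq⟩
  rw [hconj]
  exact .biUnion hfin fun c _ => (isSemilinearSet_setOfPred_semiconjBy_mul c g h).image _

end Conjugacy

section Weight

open Multiplicative

section Monoid

variable {G : Type*} [Monoid G] {S : Set G} {ω : G → ℕ}

/-- The pairs of the value and the weight of a word over `S`, as a submonoid of the product of `G`
with the monoid of weights. -/
def weightedWords (S : Set G) (ω : G → ℕ) : Submonoid (G × Multiplicative ℕ) :=
  Submonoid.closure ((fun s => (s, ofAdd (ω s))) '' S)

theorem mem_weightedWords_iff {p : G × Multiplicative ℕ} : p ∈ weightedWords S ω ↔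
    ∃ l : List G, (∀ x ∈ l, x ∈ S) ∧ l.prod = p.1 ∧ (l.map ω).sum = p.2.toAdd := by
  constructor
  · intro hp
    induction hp using Submonoid.closure_induction with
    | mem _ hs =>
      obtain ⟨s, hs, rfl⟩ := hs
      exact ⟨[s], by simpa, by simp⟩
    | one => exact ⟨[], by simp⟩
    | mul p q _ _ hp hq =>
      obtain ⟨l, hl, hlp, hlω⟩ := hp
      obtain ⟨m, hm, hmp, hmω⟩ := hq
      exact ⟨l ++ m, fun x hx => (List.mem_append.1 hx).elim (hl x) (hm x), by simp [*]⟩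
  · rintro ⟨l, hl, hlp, hlω⟩
    have hprod : (l.map fun s => (s, ofAdd (ω s))).prod = (l.prod, ofAdd (l.map ω).sum) := by
      clear hl hlp hlω
      induction l with
      | nil => rfl
      | cons s l ih => simp [ih]
    rw [hlp, hlω] at hprod
    refine (hprod ▸ list_prod_mem fun q hq => ?_ : (p.1, ofAdd p.2.toAdd) ∈ weightedWords S ω)
    obtain ⟨s, hs, rfl⟩ := List.mem_map.1 hq
    exact Submonoid.subset_closure ⟨s, hl s hs, rfl⟩

theorem fg_weightedWords (hS : S.Finite) (ω : G → ℕ) : (weightedWords S ω).FG :=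
  (Submonoid.fg_iff _).2 ⟨_, rfl, hS.image _⟩

theorem finite_setOfPred_mem_weightedWords (hS : S.Finite) (hω : ∀ s ∈ S, 0 < ω s) (k : ℕ) :
    {g | (g, ofAdd k) ∈ weightedWords S ω}.Finite := by
  have := hS.to_subtype
  refine ((List.finite_length_le S k).image fun l => (l.map Subtype.val).prod).subset ?_
  intro g hg
  obtain ⟨l, hl, hlg, hlk⟩ := mem_weightedWords_iff.1 hg
  lift l to List S using hl
  refine ⟨l, ?_, hlg⟩
  have hω' : ∀ n ∈ (l.map Subtype.val).map ω, 1 ≤ n := by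
    rintro _ hn
    obtain ⟨s, hs, rfl⟩ := List.mem_map.1 hn
    obtain ⟨s, -, rfl⟩ := List.mem_map.1 hs
    exact hω s s.2
  calc l.length = ((l.map (↑)).map ω).length • 1 := by simp
    _ ≤ ((l.map (↑)).map ω).sum := List.card_nsmul_le_sum _ 1 hω'
    _ = k := hlk

end Monoid

variable {G : Type*} [Group G] {S : Set G} {ω : G → ℕ}

theorem isLeast_wordWeight (hS : Submonoid.closure S = ⊤) (g : G) :
    IsLeast {k | (g, ofAdd k) ∈ weightedWords S ω} (wordWeight S ω g) := by
  simp only [mem_weightedWords_iff]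
  refine isLeast_csInf ?_
  obtain ⟨l, hl, hg⟩ := Submonoid.exists_list_of_mem_closure (hS ▸ Submonoid.mem_top g)
  exact ⟨_, l, hl, hg, rfl⟩

theorem isLeast_conjClassWeight (hS : Submonoid.closure S = ⊤) (c : ConjClasses G) :
    IsLeast {k | ∃ g, ConjClasses.mk g = c ∧ (g, ofAdd k) ∈ weightedWords S ω}
      (conjClassWeight S ω c) := by
  have h : IsLeast {n | ∃ g, ConjClasses.mk g = c ∧ wordWeight S ω g = n} (conjClassWeight S ω c) :=
    isLeast_csInf (c.exists_rep.elim fun g hg => ⟨_, g, hg, rfl⟩)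
  constructor
  · obtain ⟨g, hg, hgn⟩ := h.1
    exact ⟨g, hg, hgn ▸ (isLeast_wordWeight hS g).1⟩
  · rintro k ⟨g, hg, hgk⟩
    exact (h.2 ⟨g, hg, rfl⟩).trans ((isLeast_wordWeight hS g).2 hgk)

theorem finite_conjClassWeight_preimage_singleton (hfin : S.Finite) (hS : Submonoid.closure S = ⊤)
    (hω : ∀ s ∈ S, 0 < ω s) (k : ℕ) : (conjClassWeight S ω ⁻¹' {k}).Finite := by
  refine ((finite_setOfPred_mem_weightedWords hfin hω k).image ConjClasses.mk).subset ?_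
  rintro c rfl
  obtain ⟨g, hg, hgk⟩ := (isLeast_conjClassWeight hS c).1
  exact ⟨g, hgk, hg⟩

end Weight

section ConjugacyGrowth

open Multiplicative
open scoped IsMulCommutative

variable {G : Type*} [Group G]

theorem hasRationalGrowth_conjClassWeight (N : Subgroup G) [N.Normal] [IsMulCommutative N]
    [N.FiniteIndex] {S : Set G} (hfin : S.Finite) (hS : Submonoid.closure S = ⊤) {ω : G → ℕ}
    (hω : ∀ s ∈ S, 0 < ω s) : HasRationalGrowth (conjClassWeight S ω) Set.univ := by
  have : Monoid.FG G := ⟨(Submonoid.fg_iff _).2 ⟨S, hS, hfin⟩⟩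
  have : Group.FG G := Group.fg_iff_monoid_fg.2 this
  have : Group.FG N := Subgroup.fg_of_index_ne_zero N
  obtain ⟨R, hRfin, hR⟩ := exists_finite_mul_eq_univ N
  have := hRfin.to_subtype
  refine HasRationalGrowth.of_isLeast (ι := R) (w := .snd (Additive N) ℕ)
    (f := fun r p => ConjClasses.mk (p.1.toMul * (r : G)))
    (W := fun r => {p | (p.1.toMul * (r : G), ofAdd p.2) ∈ weightedWords S ω})
    (fun r => isSemilinearSet_setOfPred_mul_mem (fg_weightedWords hfin ω) r)
    (fun r s => ?_) (fun c => ?_)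
    (finite_conjClassWeight_preimage_singleton hfin hS hω)
  · simp only [ConjClasses.mk_eq_mk_iff_isConj]
    exact (isSemilinearSet_setOfPred_isConj_mul (N := N) r s).preimage
      ((AddMonoidHom.fst (Additive N) ℕ).prodMap (.fst (Additive N) ℕ))
  · convert isLeast_conjClassWeight (ω := ω) hS c using 1
    ext k
    constructor
    · rintro ⟨r, x, hx, rfl, rfl⟩
      exact ⟨_, rfl, hx⟩
    · rintro ⟨g, rfl, hg⟩
      obtain ⟨x, hx, r, hr, rfl⟩ := Set.mem_mul.1 (hR ▸ Set.mem_univ g)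
      exact ⟨⟨r, hr⟩, (.ofMul ⟨x, hx⟩, k), hg, rfl, rfl⟩

theorem conjugacy_growth_series_rational_general (N : Subgroup G) [IsMulCommutative N]
    [N.FiniteIndex] (S : Finset G) (hS : Submonoid.closure (S : Set G) = ⊤) (ω : G → ℕ)
    (hω : ∀ s ∈ S, 0 < ω s) : IsRationalSeries (PowerSeries.mk fun k =>
      (Nat.card {c : ConjClasses G // conjClassWeight (S : Set G) ω c = k} : ℤ)) := by
  have : IsMulCommutative N.normalCore :=
    ⟨⟨fun x y => Subtype.ext (setLike_mul_comm (N.normalCore_le x.2) (N.normalCore_le y.2))⟩⟩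
  have h := (hasRationalGrowth_conjClassWeight N.normalCore S.finite_toSet hS hω).isRationalSeries
  simp only [growthSeries, Set.univ_inter, ← Nat.card_coe_set_eq] at h
  exact h

end ConjugacyGrowth

/-- The weighted conjugacy growth series of a finitely generated virtually abelian group
is rational, for any finite weighted monoid generating set. -/
theorem conjugacy_growth_series_rational {G : Type*} [Group G]
    (n : ℕ) (N : Subgroup G) (hN : N.Normal) (hNfin : N.FiniteIndex)
    (hNiso : Nonempty (N ≃* Multiplicative (Fin n → ℤ)))
    (S : Finset G) (hS : Submonoid.closure (S : Set G) = ⊤)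
    (ω : G → ℕ) (hω : ∀ s ∈ S, 0 < ω s) :
    IsRationalSeries (PowerSeries.mk fun k =>
      (Nat.card {c : ConjClasses G // conjClassWeight (S : Set G) ω c = k} : ℤ)) := by
  obtain ⟨e⟩ := hNiso
  have : IsMulCommutative N := ⟨⟨fun x y => e.injective (by simp [mul_comm])⟩⟩
  exact conjugacy_growth_series_rational_general N S hS ω hω
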